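/- arXiv:1302.6004 — 2 statements merged into one kernel-verified Lean document; each statement's English description precedes it below -/
import Mathlib

section
/- Let A be an invertible n×n real matrix with all entries of A nonzero at positions where needed and det(A) ≠ 0, and let γ_{ij} denote the (i,j) entry of A⁻¹. Then the componentwise condition number of the determinant at A satisfies c^det(A) = Σ_{i,j ∈ [n]} |a_{ij}·γ_{ji}|. -/
open MeasureTheory ProbabilityTheory
open scoped ENNReal

/-- Componentwise "distance" `d(u,v) = ‖(u−v)/v‖_∞`, valued in `[0,∞]`:
the `i`-th component of the quotient is `|u i − v i|/|v i|` if `v i ≠ 0`,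
`0` if `u i = v i = 0`, and `∞` otherwise. -/
noncomputable def cwDist {ι : Type*} (u v : ι → ℝ) : ℝ≥0∞ :=
  ⨆ i, if v i ≠ 0 then ENNReal.ofReal (|u i - v i| / |v i|)
       else if u i = v i then 0 else ⊤

/-- Componentwise condition number of `F : D ⊆ ℝ^ι → ℝ^κ` at `a`:
`c^F(a) = lim_{δ→0} sup { d(F x, F a)/d(x,a) : x ∈ D, d(x,a) ≤ δ, x ≠ a }`,
the limit being an infimum since the sup is monotone in `δ`. -/
noncomputable def cwCond {ι κ : Type*} (D : Set (ι → ℝ)) (F : (ι → ℝ) → κ → ℝ)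
    (a : ι → ℝ) : ℝ≥0∞ :=
  ⨅ δ ∈ Set.Ioi (0 : ℝ≥0∞),
    ⨆ x ∈ {x ∈ D | cwDist x a ≤ δ ∧ x ≠ a}, cwDist (F x) (F a) / cwDist x a

/-- A matrix viewed as a point of `ℝ^(n×n)`. -/
def matToFun {n : ℕ} (A : Matrix (Fin n) (Fin n) ℝ) : Fin n × Fin n → ℝ :=
  fun p => A p.1 p.2

/-- A point of `ℝ^(n×n)` viewed as a matrix. -/
def funToMat {n : ℕ} (x : Fin n × Fin n → ℝ) : Matrix (Fin n) (Fin n) ℝ :=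
  Matrix.of fun i j => x (i, j)

/-- The componentwise condition number `c^det(A)` of determinant computation at `A`. -/
noncomputable def cDet {n : ℕ} (A : Matrix (Fin n) (Fin n) ℝ) : ℝ≥0∞ :=
  cwCond Set.univ (fun x (_ : Unit) => (funToMat x).det) (matToFun A)

/-- The componentwise condition number `c†_{kl}(A)` of the map `A ↦ (A⁻¹)_{kl}` at `A`. -/
noncomputable def cInv {n : ℕ} (k l : Fin n) (A : Matrix (Fin n) (Fin n) ℝ) : ℝ≥0∞ :=
  cwCond {x | IsUnit (funToMat x).det}
    (fun x (_ : Unit) => (funToMat x)⁻¹ k l) (matToFun A)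

/-- `c†(A) = max_{k,l} c†_{kl}(A)`. -/
noncomputable def cInvMax {n : ℕ} (A : Matrix (Fin n) (Fin n) ℝ) : ℝ≥0∞ :=
  ⨆ k, ⨆ l, cInv k l A

/-- A pair (matrix, right-hand side) viewed as a point of `ℝ^(n×n+n)`. -/
def pairToFun {n : ℕ} (A : Matrix (Fin n) (Fin n) ℝ) (b : Fin n → ℝ) :
    (Fin n × Fin n) ⊕ Fin n → ℝ :=
  Sum.elim (fun p => A p.1 p.2) b

def funToMat' {n : ℕ} (x : (Fin n × Fin n) ⊕ Fin n → ℝ) : Matrix (Fin n) (Fin n) ℝ :=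
  Matrix.of fun i j => x (Sum.inl (i, j))

def funToVec {n : ℕ} (x : (Fin n × Fin n) ⊕ Fin n → ℝ) : Fin n → ℝ :=
  fun i => x (Sum.inr i)

/-- The componentwise condition number `c_k(A,b)` of the map `(A,b) ↦ (A⁻¹b)_k` at `(A,b)`. -/
noncomputable def cLin {n : ℕ} (k : Fin n) (A : Matrix (Fin n) (Fin n) ℝ)
    (b : Fin n → ℝ) : ℝ≥0∞ :=
  cwCond {x | IsUnit (funToMat' x).det}
    (fun x (_ : Unit) => (Matrix.mulVec (funToMat' x)⁻¹ (funToVec x)) k) (pairToFun A b)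

/-- `c(A,b) = max_k c_k(A,b)`. -/
noncomputable def cLinMax {n : ℕ} (A : Matrix (Fin n) (Fin n) ℝ) (b : Fin n → ℝ) : ℝ≥0∞ :=
  ⨆ k, cLin k A b

/-!
A perturbation `x` lies within componentwise distance `t` of `a` exactly when
`|x i - a i| ≤ t * |a i|` for all `i`. To first order, the largest change of `f` over this box is
`t * ∑ i, |a i * ∂ᵢf a|`, attained at the corner whose signs are those of `a i * ∂ᵢf a`. Hence a
differentiable `f` with `f a ≠ 0` has condition number `(∑ i, |a i * ∂ᵢf a|) / |f a|`. For the
determinant, the partial derivatives are the entries of the adjugate.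
-/

open Filter Topology

section ComponentwiseDistance

variable {ι : Type*}

lemma cwDist_le_ofReal_iff {u v : ι → ℝ} {t : ℝ} (ht : 0 ≤ t) :
    cwDist u v ≤ ENNReal.ofReal t ↔ ∀ i, |u i - v i| ≤ t * |v i| := by
  refine iSup_le_iff.trans (forall_congr' fun i ↦ ?_)
  by_cases hv : v i = 0
  · by_cases hu : u i = 0 <;> simp [hv, hu]
  · rw [if_pos hv, ENNReal.ofReal_le_ofReal_iff ht, div_le_iff₀ (abs_pos.mpr hv)]

lemma ofReal_abs_sub_div_le_cwDist (u : ι → ℝ) {v : ι → ℝ} {i : ι} (hv : v i ≠ 0) :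
    ENNReal.ofReal (|u i - v i| / |v i|) ≤ cwDist u v :=
  le_iSup_of_le i (if_pos hv).ge

lemma cwDist_self (u : ι → ℝ) : cwDist u u = 0 := by
  simp [cwDist]

lemma norm_sub_le_of_abs_sub_le [Fintype ι] {u v : ι → ℝ} {t : ℝ} (ht : 0 ≤ t)
    (h : ∀ i, |u i - v i| ≤ t * |v i|) : ‖u - v‖ ≤ t * ‖v‖ :=
  (pi_norm_le_iff_of_nonneg (by positivity)).mpr fun i ↦
    (h i).trans (mul_le_mul_of_nonneg_left (norm_le_pi_norm v i) ht)

lemma exists_forall_cwDist_le_of_eventually [Finite ι] {D : Set (ι → ℝ)} {a : ι → ℝ}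
    {P : (ι → ℝ) → Prop} (h : ∀ᶠ x in 𝓝[D] a, P x) :
    ∃ δ > 0, ∀ x ∈ D, cwDist x a ≤ ENNReal.ofReal δ → P x := by
  cases nonempty_fintype ι
  obtain ⟨r, hr, hP⟩ := Metric.mem_nhdsWithin_iff.mp h
  have hδ : 0 < r / (‖a‖ + 1) := by positivity
  refine ⟨r / (‖a‖ + 1), hδ, fun x hxD hx ↦ hP ⟨?_, hxD⟩⟩
  rw [mem_ball_iff_norm]
  calc ‖x - a‖ ≤ r / (‖a‖ + 1) * ‖a‖ :=
        norm_sub_le_of_abs_sub_le hδ.le ((cwDist_le_ofReal_iff hδ.le).mp hx)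
    _ < r / (‖a‖ + 1) * (‖a‖ + 1) := by gcongr; exact lt_add_one _
    _ = r := div_mul_cancel₀ r (by positivity)

end ComponentwiseDistance

section ConditionNumberBounds

variable {ι κ : Type*} {D : Set (ι → ℝ)} {F : (ι → ℝ) → κ → ℝ} {a : ι → ℝ} {c : ℝ≥0∞}

lemma cwCond_le_of_forall_cwDist_le_mul {δ : ℝ≥0∞} (hδ : 0 < δ)
    (h : ∀ x ∈ D, cwDist x a ≤ δ → cwDist (F x) (F a) ≤ c * cwDist x a) :
    cwCond D F a ≤ c :=
  iInf₂_le_of_le δ hδ <| iSup₂_le fun x hx ↦ ENNReal.div_le_of_le_mul (h x hx.1 hx.2.1)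

lemma le_cwCond_of_tendsto {α : Type*} {l : Filter α} [l.NeBot] {x : α → ι → ℝ} {q : α → ℝ≥0∞}
    (hxD : ∀ᶠ s in l, x s ∈ D) (hxa : Tendsto (fun s ↦ cwDist (x s) a) l (𝓝 0))
    (hq : Tendsto q l (𝓝 c))
    (hle : ∀ᶠ s in l, q s ≤ cwDist (F (x s)) (F a) / cwDist (x s) a) :
    c ≤ cwCond D F a := by
  refine le_iInf₂ fun δ hδ ↦ le_of_tendsto hq ?_
  filter_upwards [hxD, hxa.eventually_le_const hδ, hle] with s hsD hsδ hs
  -- The supremum skips `x = a`, but there the quotient is `0 / 0 = 0`.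
  by_cases hsa : x s = a
  · have hq0 : q s ≤ 0 := by simpa [hsa, cwDist_self] using hs
    exact hq0.trans zero_le
  · exact hs.trans (le_iSup₂_of_le (x s) ⟨hsD, hsδ, hsa⟩ le_rfl)

lemma ofReal_abs_div_le_cwCond_of_hasLineDerivAt {s : ι → ℝ} {k : κ} {L : ℝ}
    (hs : ∀ i, |s i| ≤ 1) (hF : HasLineDerivAt ℝ (fun x ↦ F x k) L a (s * a)) (hk : F a k ≠ 0)
    (hD : ∀ᶠ t : ℝ in 𝓝[>] 0, a + t • (s * a) ∈ D) :
    ENNReal.ofReal (|L| / |F a k|) ≤ cwCond D F a := by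
  have hdist : ∀ᶠ t : ℝ in 𝓝[>] 0, cwDist (a + t • (s * a)) a ≤ ENNReal.ofReal t := by
    filter_upwards [self_mem_nhdsWithin] with t (ht : 0 < t)
    refine (cwDist_le_ofReal_iff ht.le).mpr fun i ↦ ?_
    simpa [abs_mul, abs_of_pos ht] using
      mul_le_mul_of_nonneg_left (mul_le_of_le_one_left (abs_nonneg (a i)) (hs i)) ht.le
  have hlim : Tendsto (fun t : ℝ ↦ ENNReal.ofReal t) (𝓝[>] 0) (𝓝 0) := by
    simpa using (ENNReal.tendsto_ofReal tendsto_id).mono_left (nhdsWithin_le_nhds (a := (0 : ℝ)))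
  refine le_cwCond_of_tendsto hD
    (tendsto_of_tendsto_of_tendsto_of_le_of_le' tendsto_const_nhds hlim (by simp) hdist)
    (ENNReal.tendsto_ofReal (hF.tendsto_slope_zero_right.abs.div_const |F a k|)) ?_
  filter_upwards [hdist, self_mem_nhdsWithin] with t htdist (ht : 0 < t)
  calc ENNReal.ofReal (|t⁻¹ • (F (a + t • (s * a)) k - F a k)| / |F a k|)
      = ENNReal.ofReal (|F (a + t • (s * a)) k - F a k| / |F a k|) / ENNReal.ofReal t := by
        rw [← ENNReal.ofReal_div_of_pos ht, smul_eq_mul, abs_mul, abs_of_pos (inv_pos.mpr ht)]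
        congr 1
        ring
    _ ≤ cwDist (F (a + t • (s * a))) (F a) / cwDist (a + t • (s * a)) a :=
        ENNReal.div_le_div (ofReal_abs_sub_div_le_cwDist _ hk) htdist

end ConditionNumberBounds

section LinearMapOnBox

variable {ι R : Type*} [Fintype ι] [DecidableEq ι]

lemma map_eq_sum_mul_map_single [CommSemiring R] (f : (ι → R) →ₗ[R] R) (v : ι → R) :
    f v = ∑ i, v i * f (Pi.single i 1) := by
  conv_lhs => rw [pi_eq_sum_univ' v, map_sum]
  simp

variable [CommRing R] [LinearOrder R] [IsStrictOrderedRing R] (f : (ι → R) →ₗ[R] R) (a : ι → R)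

lemma abs_map_le_mul_sum_abs {v : ι → R} {t : R} (hv : ∀ i, |v i| ≤ t * |a i|) :
    |f v| ≤ t * ∑ i, |a i * f (Pi.single i 1)| := by
  rw [map_eq_sum_mul_map_single, Finset.mul_sum]
  refine (Finset.abs_sum_le_sum_abs _ _).trans (Finset.sum_le_sum fun i _ ↦ ?_)
  rw [abs_mul, abs_mul, ← mul_assoc]
  exact mul_le_mul_of_nonneg_right (hv i) (abs_nonneg _)

lemma exists_map_mul_eq_sum_abs :
    ∃ s : ι → R, (∀ i, |s i| ≤ 1) ∧ f (s * a) = ∑ i, |a i * f (Pi.single i 1)| := by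
  have abs_sign_le_one (x : R) : |(SignType.sign x : R)| ≤ 1 := by
    cases SignType.sign x <;> simp
  refine ⟨fun i ↦ SignType.sign (a i * f (Pi.single i 1)), fun i ↦ abs_sign_le_one _, ?_⟩
  rw [map_eq_sum_mul_map_single]
  exact Finset.sum_congr rfl fun i _ ↦ by rw [Pi.mul_apply, mul_assoc, sign_mul_self]

end LinearMapOnBox

section ConditionNumberOfDifferentiable

variable {ι : Type*} [Fintype ι] [DecidableEq ι] {D : Set (ι → ℝ)} {a : ι → ℝ}

lemma eventually_abs_sub_le_of_hasFDerivWithinAt {f : (ι → ℝ) → ℝ} {f' : (ι → ℝ) →L[ℝ] ℝ}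
    (hf : HasFDerivWithinAt f f' D a) {C : ℝ} (hC : ∑ i, |a i * f' (Pi.single i 1)| < C) :
    ∀ᶠ x in 𝓝[D] a, ∀ t, 0 ≤ t → (∀ i, |x i - a i| ≤ t * |a i|) → |f x - f a| ≤ C * t := by
  set S := ∑ i, |a i * f' (Pi.single i 1)|
  have hη : 0 < (C - S) / (‖a‖ + 1) := div_pos (sub_pos.mpr hC) (by positivity)
  filter_upwards [hf.isLittleO.def hη] with x hx t ht hxt
  have hlin : |f' (x - a)| ≤ t * S := abs_map_le_mul_sum_abs f'.toLinearMap a hxt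
  have hrem : |f x - f a - f' (x - a)| ≤ (C - S) * t := calc
    _ ≤ (C - S) / (‖a‖ + 1) * ‖x - a‖ := hx
    _ ≤ (C - S) / (‖a‖ + 1) * (t * (‖a‖ + 1)) := by
        gcongr
        exact (norm_sub_le_of_abs_sub_le ht hxt).trans (by gcongr; exact (lt_add_one _).le)
    _ = (C - S) * t := by field_simp
  calc |f x - f a| = |(f x - f a - f' (x - a)) + f' (x - a)| := by rw [sub_add_cancel]
    _ ≤ (C - S) * t + t * S := (abs_add_le _ _).trans (add_le_add hrem hlin)
    _ = C * t := by ring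

variable {κ : Type*} [Finite κ] {F : (ι → ℝ) → κ → ℝ} {F' : κ → (ι → ℝ) →L[ℝ] ℝ}

lemma cwCond_le_of_hasFDerivWithinAt (hF : ∀ k, HasFDerivWithinAt (fun x ↦ F x k) (F' k) D a)
    {C : NNReal} (hC : ∀ k, ∑ i, |a i * F' k (Pi.single i 1)| < C * |F a k|) :
    cwCond D F a ≤ C := by
  obtain ⟨δ, hδ, hδF⟩ := exists_forall_cwDist_le_of_eventually <|
    eventually_all.mpr fun k ↦ eventually_abs_sub_le_of_hasFDerivWithinAt (hF k) (hC k)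
  refine cwCond_le_of_forall_cwDist_le_mul (ENNReal.ofReal_pos.mpr hδ) fun x hxD hx ↦ ?_
  have hfin : cwDist x a ≠ ∞ := ne_top_of_le_ne_top ENNReal.ofReal_ne_top hx
  have hxt : ∀ i, |x i - a i| ≤ (cwDist x a).toReal * |a i| :=
    (cwDist_le_ofReal_iff ENNReal.toReal_nonneg).mp (ENNReal.ofReal_toReal hfin).ge
  rw [← ENNReal.ofReal_toReal hfin, ← ENNReal.ofReal_coe_nnreal,
    ← ENNReal.ofReal_mul C.coe_nonneg, cwDist_le_ofReal_iff (by positivity)]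
  intro k
  calc |F x k - F a k| ≤ C * |F a k| * (cwDist x a).toReal :=
        hδF x hxD hx k _ ENNReal.toReal_nonneg hxt
    _ = C * (cwDist x a).toReal * |F a k| := by ring

theorem cwCond_eq_iSup_of_hasFDerivAt (hD : D ∈ 𝓝 a)
    (hF : ∀ k, HasFDerivAt (fun x ↦ F x k) (F' k) a) (ha : ∀ k, F a k ≠ 0) :
    cwCond D F a =
      ⨆ k, ENNReal.ofReal ((∑ i, |a i * F' k (Pi.single i 1)|) / |F a k|) := by
  refine le_antisymm (le_of_forall_gt_imp_ge_of_dense fun c hc ↦ ?_) (iSup_le fun k ↦ ?_)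
  · cases c with
    | top => exact le_top
    | coe C =>
      refine cwCond_le_of_hasFDerivWithinAt (fun k ↦ (hF k).hasFDerivWithinAt) fun k ↦ ?_
      have hk := (le_iSup _ k).trans_lt hc
      rwa [← ENNReal.ofReal_coe_nnreal, ENNReal.ofReal_lt_ofReal_iff_of_nonneg (by positivity),
        div_lt_iff₀ (abs_pos.mpr (ha k))] at hk
  · obtain ⟨s, hs, hsum : F' k (s * a) = _⟩ :=
      exists_map_mul_eq_sum_abs (F' k).toLinearMap a
    have hseg : Tendsto (fun t : ℝ ↦ a + t • (s * a)) (𝓝[>] 0) (𝓝 a) :=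
      tendsto_nhdsWithin_of_tendsto_nhds <|
        Continuous.tendsto' (by fun_prop) 0 a (by simp)
    have hle := ofReal_abs_div_le_cwCond_of_hasLineDerivAt hs ((hF k).hasLineDerivAt (s * a))
      (ha k) (hseg.eventually_mem hD)
    rwa [hsum, abs_of_nonneg (by positivity)] at hle

end ConditionNumberOfDifferentiable

section Determinant

lemma det_add_single {m R : Type*} [Fintype m] [DecidableEq m] [CommRing R]
    (A : Matrix m m R) (i j : m) (t : R) :
    (A + Matrix.single i j t).det = A.det + t * A.adjugate j i := by
  have hrow : A + Matrix.single i j t = A.updateRow i (A i + t • Pi.single j 1) := by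
    ext k l
    by_cases hk : k = i
    · subst hk; simp [Matrix.single_apply, Pi.single_apply, eq_comm]
    · simp [hk, Ne.symm hk]
  rw [hrow, Matrix.det_updateRow_add, Matrix.updateRow_eq_self, Matrix.det_updateRow_smul,
    Matrix.adjugate_apply]

variable {n : ℕ}

lemma differentiable_det_funToMat :
    Differentiable ℝ fun x : Fin n × Fin n → ℝ ↦ (funToMat x).det := by
  simp only [Matrix.det_apply, funToMat, Matrix.of_apply]
  fun_prop

lemma fderiv_det_funToMat_single (A : Matrix (Fin n) (Fin n) ℝ) (i j : Fin n) :
    fderiv ℝ (fun x ↦ (funToMat x).det) (matToFun A) (Pi.single (i, j) 1) = A.adjugate j i := by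
  have hline (t : ℝ) : (funToMat (matToFun A + t • Pi.single (i, j) 1)).det
      = A.det + t * A.adjugate j i := by
    rw [← det_add_single]
    congr 1
    ext k l
    simp [funToMat, matToFun, Matrix.single_apply, Pi.single_apply, eq_comm]
  rw [← (differentiable_det_funToMat _).lineDeriv_eq_fderiv, lineDeriv]
  simp [hline]

lemma cDet_eq_ofReal_sum_adjugate {A : Matrix (Fin n) (Fin n) ℝ} (hA : A.det ≠ 0) :
    cDet A = ENNReal.ofReal ((∑ i, ∑ j, |A i j * A.adjugate j i|) / |A.det|) := by
  set f' := fderiv ℝ (fun x ↦ (funToMat x).det) (matToFun A)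
  calc cDet A
      = ⨆ _ : Unit, ENNReal.ofReal ((∑ p, |matToFun A p * f' (Pi.single p 1)|) / |A.det|) :=
        cwCond_eq_iSup_of_hasFDerivAt univ_mem
          (fun _ ↦ (differentiable_det_funToMat _).hasFDerivAt) fun _ ↦ hA
    _ = ENNReal.ofReal ((∑ i, ∑ j, |A i j * A.adjugate j i|) / |A.det|) := by
        simp only [iSup_unique, Fintype.sum_prod_type, f', fderiv_det_funToMat_single, matToFun]

end Determinant

/-- For an invertible `n×n` real matrix `A` (so `det A ≠ 0`),
`c^det(A) = Σ_{i,j} |a_{ij}·γ_{ji}|` where `γ = A⁻¹`. -/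
theorem cDet_eq_sum {n : ℕ} (A : Matrix (Fin n) (Fin n) ℝ) (hA : A.det ≠ 0) :
    cDet A = ENNReal.ofReal (∑ i : Fin n, ∑ j : Fin n, |A i j * A⁻¹ j i|) := by
  have hinv (i j : Fin n) : A⁻¹ j i = A.adjugate j i / A.det := by
    rw [Matrix.inv_def, Ring.inverse_eq_inv', Matrix.smul_apply, smul_eq_mul, inv_mul_eq_div]
  simp only [cDet_eq_ofReal_sum_adjugate hA, hinv, mul_div_assoc', abs_div, ← Finset.sum_div]
end

section
/- Let S ⊆ [n]² be admissible, Ā ∈ M_S with ‖Ā‖_max ≤ 1, σ > 0, and let A ~ N_S(Ā, σ²Id). Then for every β > 1, E( log_β( Σ_{(i,j)∈S} |a_{ij}·γ_{ji}| ) ) < log_β((1 + σ)/σ) + 2·log_β|S| + 1.03/ln β, where γ = A⁻¹ (defined almost surely); the quantity Σ_{(i,j)∈S} |a_{ij}·γ_{ji}| equals the componentwise condition number c^det(A) almost surely. -/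
open MeasureTheory ProbabilityTheory
open scoped ENNReal

instance matrixMeasurableSpace {n : ℕ} : MeasurableSpace (Matrix (Fin n) (Fin n) ℝ) :=
  inferInstanceAs (MeasurableSpace (Fin n → Fin n → ℝ))

/-- The distribution `N_S(Ā, σ²Id)` of a random sparse matrix: the entries `a_{ij}` with
`(i,j) ∈ S` are independent Gaussians `N(ā_{ij}, σ²)`, and `a_{ij} = 0` for `(i,j) ∉ S`. -/
noncomputable def sparseGaussian {n : ℕ} (S : Finset (Fin n × Fin n))
    (Abar : Matrix (Fin n) (Fin n) ℝ) (σ : ℝ) : Measure (Matrix (Fin n) (Fin n) ℝ) :=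
  (Measure.pi fun p : S => gaussianReal (Abar p.1.1 p.1.2) ⟨σ ^ 2, sq_nonneg σ⟩).map
    fun g => Matrix.of fun i j => if h : (i, j) ∈ S then g ⟨(i, j), h⟩ else 0

/-- The distribution `N(b̄, σ²Id)` on `ℝⁿ`: independent Gaussian entries `N(b̄_i, σ²)`. -/
noncomputable def vecGaussian {n : ℕ} (bbar : Fin n → ℝ) (σ : ℝ) : Measure (Fin n → ℝ) :=
  Measure.pi fun i => gaussianReal (bbar i) ⟨σ ^ 2, sq_nonneg σ⟩

/-- `S ⊆ [n]²` is admissible when `M_S` contains an invertible matrix. -/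
def Admissible {n : ℕ} (S : Finset (Fin n × Fin n)) : Prop :=
  ∃ B : Matrix (Fin n) (Fin n) ℝ, (∀ i j, (i, j) ∉ S → B i j = 0) ∧ IsUnit B.det

/-!
Fix an entry `x = a_{ij}` and freeze all others. The determinant is affine in `x` with slope the
cofactor, so `a_{ij} γ_{ji} = x / (x - z)` for a root `z` that does not depend on `x`. A density
bounded by `M / |x|` gives the event `t |x - z| ≤ |x|` probability at most `2.4 M / t`, uniformly
in `z`; for `N(m, σ²)` one may take `M = 0.4 (|m| + σ) / σ`. Writing `X_{ij} = |a_{ij} γ_{ji}|`, it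
follows that `E log⁺ (X_{ij} / t) ≤ 2.4 M / t`, and `log ∑ X ≤ log |S| + log t + ∑ log⁺ (X / t)`
with `t = |S| (1 + σ) / σ` gives the bound, with the constant `0.96` in place of `1.03`.
-/

open Real

/-! ### Small ball estimates on the line -/

/-- A law on `ℝ` hits the neighbourhood `|x - z| ≤ |x| / t` of any `z ≠ 0` with probability at
most `K / t`, uniformly in `z`. The restriction `2 ≤ t` keeps this neighbourhood at a fixed
relative distance from `0` and `∞`. -/
def RelativeSmallBall (μ : Measure ℝ) (K : ℝ) : Prop :=
  ∀ z t : ℝ, z ≠ 0 → 2 ≤ t → μ {x | t * |x - z| ≤ |x|} ≤ ENNReal.ofReal (K / t)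

theorem RelativeSmallBall.mono {μ : Measure ℝ} {K L : ℝ} (h : RelativeSmallBall μ K)
    (hKL : K ≤ L) : RelativeSmallBall μ L := fun z t hz ht =>
  (h z t hz ht).trans (ENNReal.ofReal_le_ofReal (by gcongr))

theorem neg_two_mul_log_two_mul_le_log_one_sub {w : ℝ} (hw : 0 ≤ w) (hw' : w ≤ 1 / 2) :
    -(2 * log 2 * w) ≤ log (1 - w) := by
  have hconc := strictConcaveOn_log_Ioi.concaveOn.2 (Set.mem_Ioi.2 (one_pos (α := ℝ)))
    (Set.mem_Ioi.2 (half_pos (one_pos (α := ℝ)))) (show 0 ≤ 1 - 2 * w by linarith)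
    (show 0 ≤ 2 * w by linarith) (by ring)
  simp only [smul_eq_mul, log_one, one_div, log_inv] at hconc
  calc -(2 * log 2 * w) = (1 - 2 * w) * 0 + 2 * w * -log 2 := by ring
    _ ≤ log ((1 - 2 * w) * 1 + 2 * w * 2⁻¹) := hconc
    _ = log (1 - w) := by ring_nf

theorem log_add_one_div_sub_one_le {t : ℝ} (ht : 2 ≤ t) :
    log ((t + 1) / (t - 1)) ≤ 2.4 / t := by
  have hw : t⁻¹ ≤ 1 / 2 := by simpa using inv_anti₀ two_pos ht
  have hw0 : 0 < t⁻¹ := by positivity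
  have hplus : log (1 + t⁻¹) ≤ t⁻¹ := by
    linarith [log_le_sub_one_of_pos (show 0 < 1 + t⁻¹ by positivity)]
  have hminus := neg_two_mul_log_two_mul_le_log_one_sub hw0.le hw
  have hratio : (t + 1) / (t - 1) = (1 + t⁻¹) / (1 - t⁻¹) := by
    have : t - 1 ≠ 0 := by linarith
    field_simp
  rw [hratio, log_div (by positivity) (by linarith), div_eq_mul_inv]
  nlinarith [log_two_lt_d9]

theorem setOf_mul_abs_sub_le_abs_subset_Icc {z t : ℝ} (hz : 0 < z) (ht : 1 < t) :
    {x : ℝ | t * |x - z| ≤ |x|} ⊆ Set.Icc (z * t / (t + 1)) (z * t / (t - 1)) := by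
  intro x (hx : t * |x - z| ≤ |x|)
  have hx0 : 0 < x := by
    by_contra! h
    rw [abs_of_nonpos h, abs_of_nonpos (by linarith)] at hx
    nlinarith
  rw [abs_of_pos hx0] at hx
  have hle := le_abs_self (x - z)
  have hge := neg_abs_le (x - z)
  constructor
  · rw [div_le_iff₀ (by linarith)]; nlinarith
  · rw [le_div_iff₀ (by linarith)]; nlinarith

theorem setLIntegral_Icc_inv_abs {a b : ℝ} (ha : 0 < a) (hab : a ≤ b) :
    ∫⁻ x in Set.Icc a b, ENNReal.ofReal |x|⁻¹ = ENNReal.ofReal (log (b / a)) := by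
  have hpos : ∀ x ∈ Set.Icc a b, 0 < x := fun x hx => ha.trans_le hx.1
  have hint : IntegrableOn (fun x : ℝ => x⁻¹) (Set.Icc a b) :=
    (continuousOn_id.inv₀ fun x hx => (hpos x hx).ne').integrableOn_Icc
  calc ∫⁻ x in Set.Icc a b, ENNReal.ofReal |x|⁻¹ = ∫⁻ x in Set.Icc a b, ENNReal.ofReal x⁻¹ :=
        setLIntegral_congr_fun measurableSet_Icc fun x hx => by
          simp only [abs_of_pos (hpos x hx)]
    _ = ENNReal.ofReal (∫ x in Set.Icc a b, x⁻¹) := by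
        refine (ofReal_integral_eq_lintegral_ofReal hint ?_).symm
        filter_upwards [ae_restrict_mem measurableSet_Icc] with x hx
        exact (inv_pos.2 (hpos x hx)).le
    _ = ENNReal.ofReal (log (b / a)) := by
        rw [integral_Icc_eq_integral_Ioc, ← intervalIntegral.integral_of_le hab,
          integral_inv_of_pos ha (ha.trans_le hab)]

theorem setLIntegral_inv_abs_le {z t : ℝ} (hz : z ≠ 0) (ht : 2 ≤ t) :
    ∫⁻ x in {x : ℝ | t * |x - z| ≤ |x|}, ENNReal.ofReal |x|⁻¹ ≤ ENNReal.ofReal (2.4 / t) := by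
  wlog hpos : 0 < z generalizing z
  · have hreflect := this (neg_ne_zero.2 hz) (neg_pos.2 ((not_lt.1 hpos).lt_of_ne hz))
    rw [← (Measure.measurePreserving_neg (volume : Measure ℝ)).setLIntegral_comp_preimage_emb
      (MeasurableEquiv.neg ℝ).measurableEmbedding] at hreflect
    simpa only [Set.preimage_ofPred_eq, ← neg_sub', abs_neg] using hreflect
  have ht1 : 0 < t - 1 := by linarith
  calc ∫⁻ x in {x : ℝ | t * |x - z| ≤ |x|}, ENNReal.ofReal |x|⁻¹
      ≤ ∫⁻ x in Set.Icc (z * t / (t + 1)) (z * t / (t - 1)), ENNReal.ofReal |x|⁻¹ :=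
        lintegral_mono_set (setOf_mul_abs_sub_le_abs_subset_Icc hpos (by linarith))
    _ = ENNReal.ofReal (log ((z * t / (t - 1)) / (z * t / (t + 1)))) :=
        setLIntegral_Icc_inv_abs (by positivity)
          (div_le_div_of_nonneg_left (by positivity) ht1 (by linarith))
    _ = ENNReal.ofReal (log ((t + 1) / (t - 1))) := by congr 2; field_simp
    _ ≤ ENNReal.ofReal (2.4 / t) := ENNReal.ofReal_le_ofReal (log_add_one_div_sub_one_le ht)

theorem relativeSmallBall_withDensity {f : ℝ → ℝ} {M : ℝ} (hf : ∀ x, |x| * f x ≤ M) :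
    RelativeSmallBall (volume.withDensity fun x => ENNReal.ofReal (f x)) (2.4 * M) := by
  intro z t hz ht
  have hM : 0 ≤ M := by simpa using hf 0
  have hmeas : MeasurableSet {x : ℝ | t * |x - z| ≤ |x|} :=
    measurableSet_le (by fun_prop) (by fun_prop)
  rw [withDensity_apply _ hmeas]
  calc ∫⁻ x in {x : ℝ | t * |x - z| ≤ |x|}, ENNReal.ofReal (f x)
      ≤ ∫⁻ x in {x : ℝ | t * |x - z| ≤ |x|}, ENNReal.ofReal M * ENNReal.ofReal |x|⁻¹ := by
        refine setLIntegral_mono' hmeas fun x (hx : t * |x - z| ≤ |x|) => ?_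
        have hx0 : x ≠ 0 := by
          rintro rfl
          simp only [zero_sub, abs_neg, abs_zero] at hx
          nlinarith [abs_pos.2 hz]
        rw [← ENNReal.ofReal_mul hM, ← div_eq_mul_inv]
        exact ENNReal.ofReal_le_ofReal ((le_div_iff₀' (abs_pos.2 hx0)).2 (hf x))
    _ = ENNReal.ofReal M * ∫⁻ x in {x : ℝ | t * |x - z| ≤ |x|}, ENNReal.ofReal |x|⁻¹ :=
        lintegral_const_mul _ (by fun_prop)
    _ ≤ ENNReal.ofReal M * ENNReal.ofReal (2.4 / t) := by
        gcongr; exact setLIntegral_inv_abs_le hz ht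
    _ = ENNReal.ofReal (2.4 * M / t) := by rw [← ENNReal.ofReal_mul hM]; ring_nf

theorem abs_mul_exp_neg_sq_le (m x : ℝ) {σ : ℝ} (hσ : 0 < σ) :
    |x| * exp (-(x - m) ^ 2 / (2 * σ ^ 2)) ≤ |m| + σ := by
  set y := |x - m| / σ with hy
  have hxm : |x - m| = σ * y := by rw [hy]; field_simp
  have hx : |x| ≤ |m| + σ * y := by
    linarith [abs_sub_abs_le_abs_sub x m]
  have hexponent : -(x - m) ^ 2 / (2 * σ ^ 2) = -(y ^ 2 / 2) := by
    rw [← sq_abs (x - m), hxm]; field_simp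
  have hexp : y ^ 2 / 2 + 1 ≤ exp (y ^ 2 / 2) := add_one_le_exp _
  have hone : 1 ≤ exp (y ^ 2 / 2) := one_le_exp (by positivity)
  have hy_le : y ≤ exp (y ^ 2 / 2) := by nlinarith [sq_nonneg (y - 1)]
  rw [hexponent, exp_neg, ← div_eq_mul_inv, div_le_iff₀ (exp_pos _)]
  calc |x| ≤ |m| * 1 + σ * y := by linarith
    _ ≤ |m| * exp (y ^ 2 / 2) + σ * exp (y ^ 2 / 2) := by gcongr
    _ = (|m| + σ) * exp (y ^ 2 / 2) := by ring

theorem abs_mul_gaussianPDFReal_le (m x : ℝ) {v : NNReal} (hv : v ≠ 0) :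
    |x| * gaussianPDFReal m v x ≤ 0.4 * ((|m| + √v) / √v) := by
  have hσ : 0 < √(v : ℝ) := sqrt_pos.2 (NNReal.coe_pos.2 (pos_iff_ne_zero.2 hv))
  have hsq : √(v : ℝ) ^ 2 = v := sq_sqrt v.coe_nonneg
  have hsqrt : 2.5 * √(v : ℝ) ≤ √(2 * π * v) :=
    le_sqrt_of_sq_le (by nlinarith [pi_gt_d2, v.coe_nonneg])
  calc |x| * gaussianPDFReal m v x
      = (√(2 * π * v))⁻¹ * (|x| * exp (-(x - m) ^ 2 / (2 * √(v : ℝ) ^ 2))) := by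
        rw [gaussianPDFReal, hsq]; ring
    _ ≤ (2.5 * √(v : ℝ))⁻¹ * (|m| + √v) := by
        gcongr
        exact abs_mul_exp_neg_sq_le m x hσ
    _ = 0.4 * ((|m| + √v) / √v) := by ring

theorem relativeSmallBall_gaussianReal (m : ℝ) {v : NNReal} (hv : v ≠ 0) :
    RelativeSmallBall (gaussianReal m v) (0.96 * ((|m| + √v) / √v)) := by
  rw [gaussianReal_of_var_ne_zero _ hv]
  exact (relativeSmallBall_withDensity fun x => abs_mul_gaussianPDFReal_le m x hv).mono
    (by linarith)

theorem RelativeSmallBall.measure_linearFractional_le {μ : Measure ℝ} {K : ℝ}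
    (h : RelativeSmallBall μ K) (c d : ℝ) {t : ℝ} (ht : 2 ≤ t) :
    μ {x | t ≤ |x * ((x * c + d)⁻¹ * c)|} ≤ ENNReal.ofReal (K / t) := by
  by_cases hcd : c = 0 ∨ d = 0
  · have hle : ∀ x, |x * ((x * c + d)⁻¹ * c)| ≤ 1 := by
      intro x
      rcases hcd with rfl | rfl
      · simp
      · rcases eq_or_ne (x * c) 0 with hxc | hxc
        · simp [hxc]
        · rw [add_zero, mul_left_comm, inv_mul_cancel₀ hxc, abs_one]
    have hempty : {x | t ≤ |x * ((x * c + d)⁻¹ * c)|} = ∅ :=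
      Set.eq_empty_of_forall_notMem fun x (hx : t ≤ _) => by linarith [hle x]
    rw [hempty, measure_empty]
    exact zero_le
  push Not at hcd
  obtain ⟨hc, hd⟩ := hcd
  refine (measure_mono fun x (hx : t ≤ _) => ?_).trans
    (h (-d / c) t (div_ne_zero (neg_ne_zero.2 hd) hc) ht)
  have hden : x * c + d ≠ 0 := by
    intro h0
    simp only [h0, inv_zero, zero_mul, mul_zero, abs_zero] at hx
    linarith
  have hroot : x - -d / c = (x * c + d) / c := by field_simp; ring
  have hfrac : x * ((x * c + d)⁻¹ * c) = x / (x - -d / c) := by rw [hroot]; field_simp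
  rwa [hfrac, abs_div, le_div_iff₀ (abs_pos.2 (hroot ▸ div_ne_zero hden hc))] at hx

/-! ### Expectation of the positive logarithm -/

section PosLog

variable {Ω : Type*} [MeasurableSpace Ω] {μ : Measure Ω} {X : Ω → ℝ} {K t : ℝ}

theorem lintegral_posLog_div_le (hX : Measurable X) (hX0 : ∀ ω, 0 ≤ X ω) (ht : 0 < t)
    (htail : ∀ s, t ≤ s → μ {ω | s ≤ X ω} ≤ ENNReal.ofReal (K / s)) :
    ∫⁻ ω, ENNReal.ofReal (log⁺ (X ω / t)) ∂μ ≤ ENNReal.ofReal (K / t) := by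
  rw [lintegral_eq_lintegral_meas_le _ (ae_of_all _ fun ω => posLog_nonneg)
    (continuous_posLog.measurable.comp (hX.div_const t)).aemeasurable]
  have hlevel : ∀ s : ℝ, 0 < s →
      {ω | s ≤ log⁺ (X ω / t)} ⊆ {ω | t * exp s ≤ X ω} := by
    intro s hs ω (hω : s ≤ log⁺ (X ω / t))
    rw [posLog_apply, le_max_iff, or_iff_right hs.not_ge] at hω
    have hpos : 0 < X ω / t := by
      refine (div_nonneg (hX0 ω) ht.le).lt_of_ne' fun h0 => ?_
      rw [h0, log_zero] at hω
      exact hs.not_ge hω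
    exact (le_div_iff₀' ht).1 ((le_log_iff_exp_le hpos).1 hω)
  calc ∫⁻ s in Set.Ioi (0 : ℝ), μ {ω | s ≤ log⁺ (X ω / t)}
      ≤ ∫⁻ s in Set.Ioi (0 : ℝ), ENNReal.ofReal (K / t) * ENNReal.ofReal (exp (-s)) := by
        refine setLIntegral_mono' measurableSet_Ioi fun s (hs : 0 < s) => ?_
        refine (measure_mono (hlevel s hs)).trans ((htail _ ?_).trans_eq ?_)
        · exact le_mul_of_one_le_right ht.le (one_le_exp hs.le)
        · rw [← ENNReal.ofReal_mul' (exp_pos _).le, exp_neg, ← div_eq_mul_inv, div_div]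
    _ = ENNReal.ofReal (K / t) * ENNReal.ofReal (∫ s in Set.Ioi (0 : ℝ), exp (-s)) := by
        rw [lintegral_const_mul _ (by fun_prop), ofReal_integral_eq_lintegral_ofReal
          (integrableOn_exp_neg_Ioi 0) (ae_of_all _ fun s => (exp_pos _).le)]
    _ = ENNReal.ofReal (K / t) := by
        rw [integral_exp_neg_Ioi_zero, ENNReal.ofReal_one, mul_one]

theorem integrable_posLog_div (hX : Measurable X) (hX0 : ∀ ω, 0 ≤ X ω) (ht : 0 < t)
    (htail : ∀ s, t ≤ s → μ {ω | s ≤ X ω} ≤ ENNReal.ofReal (K / s)) :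
    Integrable (fun ω => log⁺ (X ω / t)) μ := by
  refine ⟨(continuous_posLog.measurable.comp (hX.div_const t)).aestronglyMeasurable, ?_⟩
  rw [hasFiniteIntegral_iff_ofReal (ae_of_all _ fun ω => posLog_nonneg)]
  exact (lintegral_posLog_div_le hX hX0 ht htail).trans_lt ENNReal.ofReal_lt_top

theorem integral_posLog_div_le (hX : Measurable X) (hX0 : ∀ ω, 0 ≤ X ω) (hK : 0 ≤ K) (ht : 0 < t)
    (htail : ∀ s, t ≤ s → μ {ω | s ≤ X ω} ≤ ENNReal.ofReal (K / s)) :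
    ∫ ω, log⁺ (X ω / t) ∂μ ≤ K / t := by
  rw [integral_eq_lintegral_of_nonneg_ae (ae_of_all _ fun ω => posLog_nonneg)
    (integrable_posLog_div hX hX0 ht htail).aestronglyMeasurable]
  exact ENNReal.toReal_le_of_le_ofReal (by positivity) (lintegral_posLog_div_le hX hX0 ht htail)

end PosLog

theorem log_sum_le_log_card_add {α : Type*} (s : Finset α) (X : α → ℝ) {t : ℝ} (ht : 1 ≤ t) :
    log (∑ p ∈ s, X p) ≤ log s.card + log t + ∑ p ∈ s, log⁺ (X p / t) := by
  have ht0 : t ≠ 0 := by positivity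
  calc log (∑ p ∈ s, X p) ≤ log⁺ (∑ p ∈ s, X p) := le_max_right _ _
    _ = log⁺ (t * ∑ p ∈ s, X p / t) := by rw [← Finset.sum_div, mul_div_cancel₀ _ ht0]
    _ ≤ log⁺ t + log⁺ (∑ p ∈ s, X p / t) := posLog_mul
    _ ≤ log t + (log s.card + ∑ p ∈ s, log⁺ (X p / t)) := by
        rw [posLog_eq_log (ht.trans (le_abs_self t))]
        gcongr
        exact posLog_sum s _
    _ = log s.card + log t + ∑ p ∈ s, log⁺ (X p / t) := by ring

/-! ### Resampling one coordinate of a product measure -/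

section Pi

variable {α : Type*} [Fintype α] [DecidableEq α]

theorem measure_pi_le_of_forall_update_le {X : α → Type*} [∀ a, MeasurableSpace (X a)]
    (μ : ∀ a, Measure (X a)) [∀ a, IsProbabilityMeasure (μ a)] {E : Set (∀ a, X a)}
    (hE : MeasurableSet E) (a : α) {c : ℝ≥0∞}
    (h : ∀ g, μ a {x | Function.update g a x ∈ E} ≤ c) : Measure.pi μ E ≤ c := by
  rw [← lintegral_indicator_one hE]
  calc ∫⁻ g, E.indicator 1 g ∂Measure.pi μ ≤ ∫⁻ _, c ∂Measure.pi μ := by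
        refine lintegral_le_of_lmarginal_le {a} (measurable_one.indicator hE) measurable_const ?_
        intro g
        have hslice : MeasurableSet {x | Function.update g a x ∈ E} :=
          measurable_update g hE
        rw [lmarginal_singleton, lmarginal_singleton, lintegral_const, measure_univ, mul_one]
        exact (lintegral_indicator_one hslice).trans_le (h g)
    _ = c := by rw [lintegral_const, measure_univ, mul_one]

theorem ae_ne_zero_of_forall_update_affine (μ : α → Measure ℝ) [∀ a, IsProbabilityMeasure (μ a)]
    [∀ a, NullSingletonClass (μ a)] {f : (α → ℝ) → ℝ} (hf : Measurable f)
    (haff : ∀ g a, ∃ c d, ∀ x, f (Function.update g a x) = x * c + d) {b : α → ℝ} (hb : f b ≠ 0) :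
    ∀ᵐ g ∂Measure.pi μ, f g ≠ 0 := by
  -- Replace the coordinates of `b` by random ones one at a time.
  suffices h : ∀ T : Finset α, ∀ᵐ g ∂Measure.pi μ, f (T.piecewise g b) ≠ 0 by
    simpa only [Finset.piecewise_univ] using h Finset.univ
  have hmeas : ∀ T : Finset α, Measurable fun g : α → ℝ => f (T.piecewise g b) := fun T =>
    hf.comp <| measurable_pi_lambda _ fun a => by
      by_cases ha : a ∈ T <;> simp only [Finset.piecewise, ha, if_true, if_false] <;> fun_prop
  intro T
  induction T using Finset.induction_on with
  | empty => simpa only [Finset.piecewise_empty] using ae_of_all _ fun _ => hb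
  | insert a T haT ih =>
    have hnull : Measure.pi μ {g | f (T.piecewise g b) ≠ 0 ∧
        f ((insert a T).piecewise g b) = 0} = 0 := by
      refine nonpos_iff_eq_zero.1 (measure_pi_le_of_forall_update_le μ ?_ a fun g => ?_)
      · exact ((hmeas T) (measurableSet_singleton 0)).compl.inter
          ((hmeas _) (measurableSet_singleton 0))
      · refine (Set.Subsingleton.measure_zero ?_ _).le
        obtain ⟨c, d, hcd⟩ := haff (T.piecewise g b) a
        have hkeep : ∀ x, T.piecewise (Function.update g a x) b = T.piecewise g b := fun x =>
          T.piecewise_congr (fun k hk => Function.update_of_ne (ne_of_mem_of_not_mem hk haT) _ _)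
            fun _ _ => rfl
        have hself : f (T.piecewise g b) = T.piecewise g b a * c + d := by
          rw [← hcd, Function.update_eq_self]
        rintro x ⟨hx, hx'⟩ y ⟨-, hy'⟩
        rw [Finset.piecewise_insert, hkeep, Function.update_self, hcd] at hx' hy'
        rw [hkeep, hself] at hx
        have hc : c ≠ 0 := by
          rintro rfl
          simp_all only [mul_zero, zero_add, ne_eq]
        exact mul_right_cancel₀ hc (by linarith)
    filter_upwards [ih, measure_eq_zero_iff_ae_notMem.1 hnull] with g hg hg'
    exact fun h0 => hg' ⟨hg, h0⟩

end Pi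

/-! ### Determinant and inverse as functions of one entry -/

section Matrix

variable {ι : Type*} [Fintype ι] [DecidableEq ι]

theorem adjugate_updateRow_apply_self {R : Type*} [CommRing R] (A : Matrix ι ι R) (i k : ι)
    (v : ι → R) : (A.updateRow i v).adjugate k i = A.adjugate k i := by
  rw [Matrix.adjugate_apply, Matrix.adjugate_apply, Matrix.updateRow_idem]

theorem det_updateRow_update {R : Type*} [CommRing R] (A : Matrix ι ι R) (i j : ι) (x : R) :
    (A.updateRow i (Function.update (A i) j x)).det
      = x * A.adjugate j i + (A.det - A i j * A.adjugate j i) := by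
  have hrow : Function.update (A i) j x = A i + (x - A i j) • Pi.single j 1 := by
    ext k
    rcases eq_or_ne k j with rfl | hk
    · simp
    · simp [hk]
  rw [hrow, Matrix.det_updateRow_add, Matrix.updateRow_eq_self, Matrix.det_updateRow_smul,
    ← Matrix.adjugate_apply]
  ring

theorem inv_apply_eq_inv_det_mul {K : Type*} [Field K] (A : Matrix ι ι K) (i j : ι) :
    A⁻¹ i j = A.det⁻¹ * A.adjugate i j := by
  rw [Matrix.inv_def, Ring.inverse_eq_inv', Matrix.smul_apply, smul_eq_mul]

/-- The summand `|a_{ij} γ_{ji}|`, `γ = A⁻¹`, of the componentwise condition number `c^det(A)`: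
the relative sensitivity of `det A` to the entry `(i, j)`. -/
noncomputable def entryCond (A : Matrix ι ι ℝ) (i j : ι) : ℝ := |A i j * A⁻¹ j i|

theorem entryCond_nonneg (A : Matrix ι ι ℝ) (i j : ι) : 0 ≤ entryCond A i j := abs_nonneg _

theorem entryCond_updateRow_update (A : Matrix ι ι ℝ) (i j : ι) (x : ℝ) :
    entryCond (A.updateRow i (Function.update (A i) j x)) i j
      = |x * ((x * A.adjugate j i + (A.det - A i j * A.adjugate j i))⁻¹ * A.adjugate j i)| := by
  rw [entryCond, inv_apply_eq_inv_det_mul, adjugate_updateRow_apply_self, det_updateRow_update,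
    Matrix.updateRow_self, Function.update_self]

theorem sum_mul_inv_apply_eq_one {K : Type*} [Field K] {A : Matrix ι ι K} (hA : A.det ≠ 0)
    (i : ι) : ∑ j, A i j * A⁻¹ j i = 1 := by
  rw [← Matrix.mul_apply, Matrix.mul_nonsing_inv _ (isUnit_iff_ne_zero.2 hA), Matrix.one_apply_eq]

section Support

variable {A : Matrix ι ι ℝ} {S : Finset (ι × ι)}

theorem log_sum_entryCond_nonneg (hA : A.det ≠ 0) (hsupp : ∀ i j, (i, j) ∉ S → A i j = 0) :
    0 ≤ log (∑ p ∈ S, entryCond A p.1 p.2) := by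
  rcases isEmpty_or_nonempty ι with hι | ⟨⟨i⟩⟩
  · simp [Finset.eq_empty_of_isEmpty S]
  refine log_nonneg ?_
  have hzero : ∀ p : ι × ι, p ∉ S → entryCond A p.1 p.2 = 0 := fun p hp => by
    rw [entryCond, hsupp p.1 p.2 hp, zero_mul, abs_zero]
  calc (1 : ℝ) = |∑ j, A i j * A⁻¹ j i| := by rw [sum_mul_inv_apply_eq_one hA, abs_one]
    _ ≤ ∑ j, entryCond A i j := Finset.abs_sum_le_sum_abs _ _
    _ ≤ ∑ k, ∑ j, entryCond A k j :=
        Finset.single_le_sum (f := fun k => ∑ j, entryCond A k j)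
          (fun k _ => Finset.sum_nonneg fun j _ => entryCond_nonneg A k j) (Finset.mem_univ i)
    _ = ∑ p ∈ S, entryCond A p.1 p.2 := by
        rw [← Fintype.sum_prod_type' (entryCond A)]
        exact (Finset.sum_subset (Finset.subset_univ S) fun p _ => hzero p).symm

theorem sum_entryCond_le_one_of_card_le_one (hA : A.det ≠ 0)
    (hsupp : ∀ i j, (i, j) ∉ S → A i j = 0) (hS : S.card ≤ 1) :
    ∑ p ∈ S, entryCond A p.1 p.2 ≤ 1 := by
  rcases Nat.le_one_iff_eq_zero_or_eq_one.1 hS with h0 | h1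
  · rw [Finset.card_eq_zero.1 h0, Finset.sum_empty]
    exact zero_le_one
  · obtain ⟨⟨i, j⟩, rfl⟩ := Finset.card_eq_one.1 h1
    have hsingle : ∑ k, A i k * A⁻¹ k i = A i j * A⁻¹ j i :=
      Finset.sum_eq_single_of_mem j (Finset.mem_univ j) fun k _ hk => by
        rw [hsupp i k fun h => hk (congrArg Prod.snd (Finset.mem_singleton.1 h)), zero_mul]
    rw [Finset.sum_singleton, entryCond, ← hsingle, sum_mul_inv_apply_eq_one hA, abs_one]

end Support

section Measurability

variable {Ω : Type*} [MeasurableSpace Ω] {F : Ω → Matrix ι ι ℝ}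

theorem measurable_det (hF : ∀ i j, Measurable fun ω => F ω i j) :
    Measurable fun ω => (F ω).det := by
  simp only [Matrix.det_apply]
  exact Finset.measurable_sum _ fun s _ =>
    (Finset.measurable_prod _ fun i _ => hF _ _).const_smul _

theorem measurable_entryCond (hF : ∀ i j, Measurable fun ω => F ω i j) (i j : ι) :
    Measurable fun ω => entryCond (F ω) i j := by
  have hadj : Measurable fun ω => (F ω).adjugate j i := by
    simp only [Matrix.adjugate_apply]
    refine measurable_det fun k l => ?_
    rcases eq_or_ne k i with rfl | hk
    · simp only [Matrix.updateRow_self, measurable_const]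
    · simpa only [Matrix.updateRow_ne hk] using hF k l
  simp only [entryCond, inv_apply_eq_inv_det_mul]
  exact ((hF i j).mul ((measurable_det hF).inv.mul hadj)).abs

theorem measurable_log_sum_entryCond (hF : ∀ i j, Measurable fun ω => F ω i j)
    (S : Finset (ι × ι)) :
    Measurable fun ω => log (∑ p ∈ S, entryCond (F ω) p.1 p.2) :=
  (Finset.measurable_sum S fun p _ => measurable_entryCond hF p.1 p.2).log

end Measurability

end Matrix

/-! ### Random matrices with independent entries on a given support -/

/-- The matrix of `M_S` whose entries on `S` are `g`. -/
def supportedMatrix {ι : Type*} [DecidableEq ι] (S : Finset (ι × ι)) (g : S → ℝ) :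
    Matrix ι ι ℝ :=
  Matrix.of fun i j => if h : (i, j) ∈ S then g ⟨(i, j), h⟩ else 0

section SupportedMatrix

variable {ι : Type*} [DecidableEq ι] (S : Finset (ι × ι))

theorem supportedMatrix_apply_of_notMem (g : S → ℝ) {i j : ι} (h : (i, j) ∉ S) :
    supportedMatrix S g i j = 0 := dif_neg h

theorem supportedMatrix_restrict {B : Matrix ι ι ℝ} (hB : ∀ i j, (i, j) ∉ S → B i j = 0) :
    supportedMatrix S (fun p => B p.1.1 p.1.2) = B := by
  ext i j
  by_cases h : (i, j) ∈ S
  · exact dif_pos h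
  · rw [supportedMatrix_apply_of_notMem S _ h, hB i j h]

theorem supportedMatrix_update (g : S → ℝ) (p : S) (x : ℝ) :
    supportedMatrix S (Function.update g p x) = (supportedMatrix S g).updateRow p.1.1
      (Function.update (supportedMatrix S g p.1.1) p.1.2 x) := by
  obtain ⟨⟨i, j⟩, hp⟩ := p
  ext k l
  simp only [supportedMatrix, Matrix.updateRow_apply, Function.update_apply, Matrix.of_apply,
    Subtype.mk.injEq, Prod.mk.injEq]
  grind

theorem measurable_supportedMatrix_apply (i j : ι) :
    Measurable fun g => supportedMatrix S g i j := by
  by_cases h : (i, j) ∈ S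
  · simpa only [supportedMatrix, Matrix.of_apply, h, dif_pos] using measurable_pi_apply _
  · simpa only [supportedMatrix_apply_of_notMem S _ h] using measurable_const

variable {S} [Fintype ι] {μ : S → Measure ℝ} [∀ p, IsProbabilityMeasure (μ p)] {K t : ℝ}

theorem ae_det_supportedMatrix_ne_zero [∀ p, NullSingletonClass (μ p)] {B : Matrix ι ι ℝ}
    (hB : ∀ i j, (i, j) ∉ S → B i j = 0) (hdet : B.det ≠ 0) :
    ∀ᵐ g ∂Measure.pi μ, (supportedMatrix S g).det ≠ 0 := by
  refine ae_ne_zero_of_forall_update_affine μ (measurable_det (measurable_supportedMatrix_apply S))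
    (fun g p => ⟨(supportedMatrix S g).adjugate p.1.2 p.1.1, (supportedMatrix S g).det
      - supportedMatrix S g p.1.1 p.1.2 * (supportedMatrix S g).adjugate p.1.2 p.1.1, fun x => ?_⟩)
    (by rwa [supportedMatrix_restrict S hB])
  rw [supportedMatrix_update, det_updateRow_update]

theorem measure_pi_entryCond_ge_le (hμ : ∀ p, RelativeSmallBall (μ p) K) (ht : 2 ≤ t)
    {p : ι × ι} (hp : p ∈ S) :
    Measure.pi μ {g | t ≤ entryCond (supportedMatrix S g) p.1 p.2} ≤ ENNReal.ofReal (K / t) := by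
  refine measure_pi_le_of_forall_update_le μ (measurableSet_le measurable_const
    (measurable_entryCond (measurable_supportedMatrix_apply S) _ _)) ⟨p, hp⟩ fun g => ?_
  simp only [Set.mem_ofPred_eq, supportedMatrix_update, entryCond_updateRow_update]
  exact (hμ ⟨p, hp⟩).measure_linearFractional_le _ _ ht

theorem integrable_sum_posLog_entryCond_div (hμ : ∀ p, RelativeSmallBall (μ p) K) (ht : 2 ≤ t) :
    Integrable (fun g => ∑ p ∈ S, log⁺ (entryCond (supportedMatrix S g) p.1 p.2 / t))
      (Measure.pi μ) :=
  integrable_finsetSum S fun _ hp => integrable_posLog_div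
    (measurable_entryCond (measurable_supportedMatrix_apply S) _ _)
    (fun _ => entryCond_nonneg _ _ _) (by linarith)
    fun _ hs => measure_pi_entryCond_ge_le hμ (ht.trans hs) hp

theorem integral_sum_posLog_entryCond_div_le (hμ : ∀ p, RelativeSmallBall (μ p) K) (hK : 0 ≤ K)
    (ht : 2 ≤ t) :
    ∫ g, ∑ p ∈ S, log⁺ (entryCond (supportedMatrix S g) p.1 p.2 / t) ∂Measure.pi μ
      ≤ S.card * (K / t) := by
  have ht0 : 0 < t := by linarith
  have hX : ∀ p : ι × ι, Measurable fun g => entryCond (supportedMatrix S g) p.1 p.2 := fun p =>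
    measurable_entryCond (measurable_supportedMatrix_apply S) _ _
  have htail : ∀ p ∈ S, ∀ s, t ≤ s →
      Measure.pi μ {g | s ≤ entryCond (supportedMatrix S g) p.1 p.2} ≤ ENNReal.ofReal (K / s) :=
    fun p hp s hs => measure_pi_entryCond_ge_le hμ (ht.trans hs) hp
  rw [integral_finsetSum S fun p hp =>
    integrable_posLog_div (hX p) (fun _ => entryCond_nonneg _ _ _) ht0 (htail p hp),
    ← nsmul_eq_mul]
  exact Finset.sum_le_card_nsmul S _ _ fun p hp =>
    integral_posLog_div_le (hX p) (fun _ => entryCond_nonneg _ _ _) hK ht0 (htail p hp)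

theorem integrable_log_sum_entryCond (hdet : ∀ᵐ g ∂Measure.pi μ, (supportedMatrix S g).det ≠ 0)
    (hμ : ∀ p, RelativeSmallBall (μ p) K) :
    Integrable (fun g => log (∑ p ∈ S, entryCond (supportedMatrix S g) p.1 p.2))
      (Measure.pi μ) := by
  refine ((integrable_const (log S.card + log 2)).add
    (integrable_sum_posLog_entryCond_div hμ le_rfl)).mono'
    (measurable_log_sum_entryCond (measurable_supportedMatrix_apply S) S).aestronglyMeasurable ?_
  filter_upwards [hdet] with g hg
  rw [norm_of_nonneg
    (log_sum_entryCond_nonneg hg fun _ _ => supportedMatrix_apply_of_notMem S g)]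
  exact log_sum_le_log_card_add S _ one_le_two

theorem integral_log_sum_entryCond_le (hdet : ∀ᵐ g ∂Measure.pi μ, (supportedMatrix S g).det ≠ 0)
    (hμ : ∀ p, RelativeSmallBall (μ p) K) (hK : 0 ≤ K) (ht : 2 ≤ t) :
    ∫ g, log (∑ p ∈ S, entryCond (supportedMatrix S g) p.1 p.2) ∂Measure.pi μ
      ≤ log S.card + log t + S.card * (K / t) := by
  have hsum := integrable_sum_posLog_entryCond_div hμ ht
  calc ∫ g, log (∑ p ∈ S, entryCond (supportedMatrix S g) p.1 p.2) ∂Measure.pi μ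
      ≤ ∫ g, (log S.card + log t
          + ∑ p ∈ S, log⁺ (entryCond (supportedMatrix S g) p.1 p.2 / t)) ∂Measure.pi μ :=
        integral_mono (integrable_log_sum_entryCond hdet hμ) ((integrable_const _).add hsum)
          fun g => log_sum_le_log_card_add S _ (by linarith)
    _ = log S.card + log t
          + ∫ g, ∑ p ∈ S, log⁺ (entryCond (supportedMatrix S g) p.1 p.2 / t) ∂Measure.pi μ := by
        rw [integral_add (integrable_const _) hsum, integral_const, probReal_univ, one_smul]
    _ ≤ log S.card + log t + S.card * (K / t) := by
        gcongr
        exact integral_sum_posLog_entryCond_div_le hμ hK ht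

theorem integral_log_sum_entryCond_le_add_two_mul_log_card {κ : ℝ} (hκ : 1 ≤ κ) (hK : 0 ≤ K)
    (hdet : ∀ᵐ g ∂Measure.pi μ, (supportedMatrix S g).det ≠ 0)
    (hμ : ∀ p, RelativeSmallBall (μ p) (K * κ)) :
    ∫ g, log (∑ p ∈ S, entryCond (supportedMatrix S g) p.1 p.2) ∂Measure.pi μ
      ≤ log κ + 2 * log S.card + K := by
  rcases le_or_gt S.card 1 with hS | hS
  · have hnonpos : ∫ g, log (∑ p ∈ S, entryCond (supportedMatrix S g) p.1 p.2) ∂Measure.pi μ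
        ≤ 0 := by
      refine integral_nonpos_of_ae ?_
      filter_upwards [hdet] with g hg
      exact log_nonpos (Finset.sum_nonneg fun p _ => entryCond_nonneg _ _ _)
        (sum_entryCond_le_one_of_card_le_one hg
          (fun _ _ => supportedMatrix_apply_of_notMem S g) hS)
    linarith [log_nonneg hκ, log_natCast_nonneg S.card]
  · have hS2 : (2 : ℝ) ≤ S.card := by exact_mod_cast hS
    calc ∫ g, log (∑ p ∈ S, entryCond (supportedMatrix S g) p.1 p.2) ∂Measure.pi μ
        ≤ log S.card + log (S.card * κ) + S.card * (K * κ / (S.card * κ)) :=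
          integral_log_sum_entryCond_le hdet hμ (by positivity) (by nlinarith)
      _ = log κ + 2 * log S.card + K := by
          rw [log_mul (by positivity) (by positivity)]
          field_simp
          ring

end SupportedMatrix

section SparseGaussian

variable {n : ℕ} {S : Finset (Fin n × Fin n)} {Abar : Matrix (Fin n) (Fin n) ℝ} {σ : ℝ}

theorem measurable_matrix_apply (i j : Fin n) :
    Measurable fun A : Matrix (Fin n) (Fin n) ℝ => A i j :=
  (measurable_pi_apply j).comp (measurable_pi_apply i)

theorem sparseGaussian_eq_map : sparseGaussian S Abar σ =
    (Measure.pi fun p : S => gaussianReal (Abar p.1.1 p.1.2) (σ ^ 2).toNNReal).map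
      (supportedMatrix S) := by
  rw [toNNReal_of_nonneg (sq_nonneg σ)]
  rfl

theorem integral_sparseGaussian {F : Matrix (Fin n) (Fin n) ℝ → ℝ} (hF : Measurable F) :
    ∫ A, F A ∂sparseGaussian S Abar σ = ∫ g, F (supportedMatrix S g)
      ∂Measure.pi fun p : S => gaussianReal (Abar p.1.1 p.1.2) (σ ^ 2).toNNReal := by
  have hmeas : Measurable (supportedMatrix S) := measurable_pi_lambda _ fun i =>
    measurable_pi_lambda _ fun j => measurable_supportedMatrix_apply S i j
  rw [sparseGaussian_eq_map]
  exact integral_map hmeas.aemeasurable hF.aestronglyMeasurable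

theorem integral_log_sum_entryCond_sparseGaussian_le (hS : Admissible S) {M : ℝ} (hM : 0 ≤ M)
    (hmax : ∀ p ∈ S, |Abar p.1 p.2| ≤ M) (hσ : 0 < σ) :
    ∫ A, log (∑ p ∈ S, entryCond A p.1 p.2) ∂sparseGaussian S Abar σ
      ≤ log ((M + σ) / σ) + 2 * log S.card + 0.96 := by
  have hvar : (σ ^ 2).toNNReal ≠ 0 := (toNNReal_pos.2 (pow_pos hσ 2)).ne'
  have hsd : √((σ ^ 2).toNNReal : ℝ) = σ := by
    rw [coe_toNNReal _ (sq_nonneg σ), sqrt_sq hσ.le]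
  have := fun m : ℝ => nullSingletonClass_gaussianReal (μ := m) hvar
  obtain ⟨B, hB, hdet⟩ := hS
  rw [integral_sparseGaussian (measurable_log_sum_entryCond measurable_matrix_apply S)]
  refine integral_log_sum_entryCond_le_add_two_mul_log_card ?_ (by norm_num)
    (ae_det_supportedMatrix_ne_zero hB hdet.ne_zero) fun p =>
      (relativeSmallBall_gaussianReal _ hvar).mono ?_
  · rw [le_div_iff₀ hσ]; linarith
  · rw [hsd]
    gcongr
    exact hmax p.1 p.2

end SparseGaussian

theorem expectation_log_cdet_lt_general {n : ℕ} (S : Finset (Fin n × Fin n)) (hS : Admissible S)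
    (Abar : Matrix (Fin n) (Fin n) ℝ) {M : ℝ} (hM : 0 ≤ M) (hmax : ∀ p ∈ S, |Abar p.1 p.2| ≤ M)
    (σ : ℝ) (hσ : 0 < σ) (β : ℝ) (hβ : 1 < β) :
    ∫ A, log (∑ p ∈ S, |A p.1 p.2 * A⁻¹ p.2 p.1|) / log β ∂(sparseGaussian S Abar σ)
      < log ((M + σ) / σ) / log β + 2 * (log S.card / log β) + 1.03 / log β := by
  have hbound : ∫ A, log (∑ p ∈ S, |A p.1 p.2 * A⁻¹ p.2 p.1|) ∂(sparseGaussian S Abar σ)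
      ≤ log ((M + σ) / σ) + 2 * log S.card + 0.96 :=
    integral_log_sum_entryCond_sparseGaussian_le hS hM hmax hσ
  calc ∫ A, log (∑ p ∈ S, |A p.1 p.2 * A⁻¹ p.2 p.1|) / log β ∂(sparseGaussian S Abar σ)
      = (∫ A, log (∑ p ∈ S, |A p.1 p.2 * A⁻¹ p.2 p.1|) ∂(sparseGaussian S Abar σ)) / log β :=
        integral_div _ _
    _ < (log ((M + σ) / σ) + 2 * log S.card + 1.03) / log β :=
        div_lt_div_of_pos_right (hbound.trans_lt (by norm_num)) (log_pos hβ)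
    _ = log ((M + σ) / σ) / log β + 2 * (log S.card / log β) + 1.03 / log β := by ring

/-- Let `S ⊆ [n]²` be admissible, `Ā ∈ M_S` with `‖Ā‖_max ≤ 1`, `σ > 0`
and `A ~ N_S(Ā, σ²Id)`. For every `β > 1`,
`E(log_β(Σ_{(i,j)∈S} |a_{ij}·γ_{ji}|)) < log_β((1+σ)/σ) + 2·log_β|S| + 1.03/ln β`,
where `γ = A⁻¹` and the sum equals `c^det(A)` almost surely. -/
theorem expectation_log_cdet_lt {n : ℕ} (S : Finset (Fin n × Fin n)) (hS : Admissible S)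
    (Abar : Matrix (Fin n) (Fin n) ℝ) (hsupp : ∀ i j, (i, j) ∉ S → Abar i j = 0)
    (hmax : ∀ i j, |Abar i j| ≤ 1) (σ : ℝ) (hσ : 0 < σ)
    (β : ℝ) (hβ : 1 < β) :
    ∫ A, Real.log (∑ p ∈ S, |A p.1 p.2 * A⁻¹ p.2 p.1|) / Real.log β
        ∂(sparseGaussian S Abar σ)
      < Real.log ((1 + σ) / σ) / Real.log β + 2 * (Real.log S.card / Real.log β)
          + 1.03 / Real.log β := by
  exact expectation_log_cdet_lt_general S hS Abar zero_le_one (fun p _ => hmax p.1 p.2) σ hσ β hβ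
end
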